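/- Let M be a left R-module. Then there exists a left R-module N containing M as a direct summand and a short exact sequence 0 → N → X → N → 0 where X = (⊕_{i∈ℕ} Pᵢ) ⊕ (∏_{i∈ℕ} Iᵢ) with all Pᵢ projective and all Iᵢ injective. Explicitly, given a projective resolution ⋯ → P₁ → P₀ → M → 0 with images Lᵢ and an injective coresolution 0 → M → I₀ → I₁ → ⋯ with kernels Kᵢ, one may take N = M ⊕ (⊕_{i∈ℕ} L_{i+1}) ⊕ (∏_{i∈ℕ} K_{i+1}). -/

import Mathlib

open CategoryTheory CategoryTheory.Limits

set_option autoImplicit false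

universe u

variable {R : Type u} [Ring R]

/-- A short exact sequence of `R`-modules encoded by two linear maps. -/
def IsSES {A B C : ModuleCat.{u} R} (f : A →ₗ[R] B) (g : B →ₗ[R] C) : Prop :=
  Function.Injective f ∧ Function.Exact f g ∧ Function.Surjective g

open DirectSum

/-!
The direct sum of the sequences `0 → Lᵢ₊₁ → Pᵢ → Lᵢ → 0` and the direct product of the sequences
`0 → Kᵢ → Iᵢ → Kᵢ₊₁ → 0` together form a short exact sequence with middle term
`(⨁ᵢ Pᵢ) × ∏ᵢ Iᵢ` and end terms `(⨁ᵢ Lᵢ₊₁) × ∏ᵢ Kᵢ` and `(⨁ᵢ Lᵢ) × ∏ᵢ Kᵢ₊₁`. Splitting the factor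
`K₀ = M` off the left end and the summand `L₀ = M` off the right end turns both of them into
`M × (⨁ᵢ Lᵢ₊₁) × ∏ᵢ Kᵢ₊₁`.
-/

universe v

/-- A short exact sequence `0 → A → B → C → 0` of modules. Unlike `IsSES` it is stated for
unbundled modules in arbitrary universes. -/
def IsShortExact {A B C : Type*} [AddCommGroup A] [AddCommGroup B] [AddCommGroup C]
    [Module R A] [Module R B] [Module R C] (f : A →ₗ[R] B) (g : B →ₗ[R] C) : Prop :=
  Function.Injective f ∧ Function.Exact f g ∧ Function.Surjective g

namespace IsShortExact

section Basic

variable {A B C A' B' C' : Type*} [AddCommGroup A] [AddCommGroup B] [AddCommGroup C]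
  [AddCommGroup A'] [AddCommGroup B'] [AddCommGroup C'] [Module R A] [Module R B] [Module R C]
  [Module R A'] [Module R B'] [Module R C']

theorem subtype_ker {g : B →ₗ[R] C} (hg : Function.Surjective g) :
    IsShortExact (LinearMap.ker g).subtype g :=
  ⟨Subtype.val_injective, LinearMap.exact_subtype_ker_map g, hg⟩

theorem mkQ_range {f : A →ₗ[R] B} (hf : Function.Injective f) :
    IsShortExact f (LinearMap.range f).mkQ :=
  ⟨hf, LinearMap.exact_map_mkQ_range f, Submodule.mkQ_surjective _⟩

theorem comp_linearEquiv {f : A →ₗ[R] B} {g : B →ₗ[R] C} (h : IsShortExact f g)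
    (e : A' ≃ₗ[R] A) (e' : C ≃ₗ[R] C') :
    IsShortExact (f ∘ₗ (e : A' →ₗ[R] A)) ((e' : C →ₗ[R] C') ∘ₗ g) := by
  obtain ⟨hf, hfg, hg⟩ := h
  exact ⟨hf.comp e.injective,
    e.precomp_exact_iff_exact.mpr (e'.postcomp_exact_iff_exact.mpr hfg), e'.surjective.comp hg⟩

theorem prodMap {f : A →ₗ[R] B} {g : B →ₗ[R] C} {f' : A' →ₗ[R] B'} {g' : B' →ₗ[R] C'}
    (h : IsShortExact f g) (h' : IsShortExact f' g') :
    IsShortExact (f.prodMap f') (g.prodMap g') := by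
  obtain ⟨hf, hfg, hg⟩ := h
  obtain ⟨hf', hfg', hg'⟩ := h'
  refine ⟨hf.prodMap hf', LinearMap.exact_iff.mpr ?_, hg.prodMap hg'⟩
  rw [LinearMap.ker_prodMap, LinearMap.range_prodMap, hfg.linearMap_ker_eq,
    hfg'.linearMap_ker_eq]

end Basic

section Family

variable {J : Type*} {A B C : J → Type*} [∀ j, AddCommGroup (A j)] [∀ j, AddCommGroup (B j)]
  [∀ j, AddCommGroup (C j)] [∀ j, Module R (A j)] [∀ j, Module R (B j)] [∀ j, Module R (C j)]
  {f : ∀ j, A j →ₗ[R] B j} {g : ∀ j, B j →ₗ[R] C j}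

theorem lmap (h : ∀ j, IsShortExact (f j) (g j)) :
    IsShortExact (DirectSum.lmap f) (DirectSum.lmap g) := by
  refine ⟨(DirectSum.lmap_injective f).mpr fun j => (h j).1, LinearMap.exact_iff.mpr ?_,
    (DirectSum.lmap_surjective g).mpr fun j => (h j).2.2⟩
  simp only [DirectSum.ker_lmap, DirectSum.range_lmap, (h _).2.1.linearMap_ker_eq]

theorem piMap (h : ∀ j, IsShortExact (f j) (g j)) :
    IsShortExact (LinearMap.piMap f) (LinearMap.piMap g) := by
  refine ⟨.piMap fun j => (h j).1, fun y => ?_, .piMap fun j => (h j).2.2⟩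
  calc LinearMap.piMap g y = 0 ↔ ∀ j, g j (y j) = 0 := funext_iff
    _ ↔ ∀ j, y j ∈ Set.range (f j) := forall_congr' fun j => (h j).2.1 (y j)
    _ ↔ y ∈ Set.range (LinearMap.piMap f) := by
      rw [LinearMap.coe_piMap, Set.range_piMap, Set.mem_univ_pi]

end Family

end IsShortExact

section HeadTail

/-- The bijection sending `0` to `none` and `n + 1` to `some n`, which lets the decompositions
of sums and products over `Option ℕ` be used over `ℕ`. -/
def natEquivOptionNat : ℕ ≃ Option ℕ where
  toFun n := n.casesOn none some
  invFun o := o.elim 0 Nat.succ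
  left_inv n := by cases n <;> rfl
  right_inv o := by cases o <;> rfl

variable (A : ℕ → Type*) [∀ i, AddCommGroup (A i)] [∀ i, Module R (A i)]

/-- Splitting off the zeroth summand of a countable direct sum. -/
noncomputable def directSumNatEquivProd : (⨁ i, A i) ≃ₗ[R] A 0 × ⨁ i, A (i + 1) :=
  (DirectSum.lequivCongrLeft R natEquivOptionNat).trans (DirectSum.lequivProdDirectSum R)

/-- Splitting off the zeroth factor of a countable product. -/
def piNatEquivProd : (∀ i, A i) ≃ₗ[R] A 0 × ∀ i, A (i + 1) :=
  (LinearEquiv.piCongrLeft' R A natEquivOptionNat).trans (LinearEquiv.piOptionEquivProd R)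

end HeadTail

theorem exists_isShortExact_of_resolutions {M : Type*} [AddCommGroup M] [Module R M]
    {L P K I : ℕ → Type*}
    [∀ i, AddCommGroup (L i)] [∀ i, AddCommGroup (P i)] [∀ i, AddCommGroup (K i)]
    [∀ i, AddCommGroup (I i)] [∀ i, Module R (L i)] [∀ i, Module R (P i)] [∀ i, Module R (K i)]
    [∀ i, Module R (I i)] (eL : L 0 ≃ₗ[R] M) (eK : K 0 ≃ₗ[R] M)
    {ι : ∀ i, L (i + 1) →ₗ[R] P i} {π : ∀ i, P i →ₗ[R] L i}
    {a : ∀ i, K i →ₗ[R] I i} {b : ∀ i, I i →ₗ[R] K (i + 1)}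
    (hL : ∀ i, IsShortExact (ι i) (π i)) (hK : ∀ i, IsShortExact (a i) (b i)) :
    ∃ (f : (M × (⨁ i, L (i + 1)) × ∀ i, K (i + 1)) →ₗ[R] (⨁ i, P i) × ∀ i, I i)
      (g : ((⨁ i, P i) × ∀ i, I i) →ₗ[R] M × (⨁ i, L (i + 1)) × ∀ i, K (i + 1)),
      IsShortExact f g := by
  let S := ⨁ i, L (i + 1)
  let T := ∀ i, K (i + 1)
  let leftEquiv : (S × ∀ i, K i) ≃ₗ[R] M × S × T :=
    (LinearEquiv.refl R S).prodCongr (piNatEquivProd K ≪≫ₗ eK.prodCongr (.refl R T)) ≪≫ₗ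
      (LinearEquiv.prodAssoc R S M T).symm ≪≫ₗ
      (LinearEquiv.prodComm R S M).prodCongr (.refl R T) ≪≫ₗ .prodAssoc R M S T
  let rightEquiv : ((⨁ i, L i) × T) ≃ₗ[R] M × S × T :=
    (directSumNatEquivProd L ≪≫ₗ eL.prodCongr (.refl R S)).prodCongr (.refl R T) ≪≫ₗ
      .prodAssoc R M S T
  exact ⟨_, _,
    ((IsShortExact.lmap hL).prodMap (.piMap hK)).comp_linearEquiv leftEquiv.symm rightEquiv⟩

section Syzygy

variable [Small.{v} R] (M : ModuleCat.{v} R)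

/-- The syzygies `Lᵢ` of the projective resolution of `M` built from the chosen projective
presentations `Projective.π`. -/
noncomputable def syzygy : ℕ → ModuleCat.{v} R
  | 0 => M
  | i + 1 => ModuleCat.of R (LinearMap.ker (Projective.π (syzygy i)).hom)

/-- The cosyzygies `Kᵢ` of the injective coresolution of `M` built from the chosen embeddings
`Injective.ι`. -/
noncomputable def cosyzygy : ℕ → ModuleCat.{v} R
  | 0 => M
  | i + 1 => ModuleCat.of R
      ((Injective.under (cosyzygy i) : ModuleCat.{v} R) ⧸
        LinearMap.range (Injective.ι (cosyzygy i)).hom)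

/-- The term `Pᵢ` of the projective resolution of `M` with syzygies `syzygy M`. -/
noncomputable abbrev projectiveTerm (i : ℕ) : ModuleCat.{v} R := Projective.over (syzygy M i)

/-- The term `Iᵢ` of the injective coresolution of `M` with cosyzygies `cosyzygy M`. -/
noncomputable abbrev injectiveTerm (i : ℕ) : ModuleCat.{v} R := Injective.under (cosyzygy M i)

/-- The inclusion `Lᵢ₊₁ → Pᵢ` of the next syzygy. -/
noncomputable def syzygyInclusion (i : ℕ) : syzygy M (i + 1) →ₗ[R] projectiveTerm M i :=
  (LinearMap.ker (Projective.π (syzygy M i)).hom).subtype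

/-- The projection `Iᵢ → Kᵢ₊₁` onto the next cosyzygy. -/
noncomputable def cosyzygyProjection (i : ℕ) : injectiveTerm M i →ₗ[R] cosyzygy M (i + 1) :=
  (LinearMap.range (Injective.ι (cosyzygy M i)).hom).mkQ

theorem isShortExact_syzygyInclusion (i : ℕ) :
    IsShortExact (syzygyInclusion M i) (Projective.π (syzygy M i)).hom :=
  .subtype_ker ((ModuleCat.epi_iff_surjective _).mp inferInstance)

theorem isShortExact_cosyzygyProjection (i : ℕ) :
    IsShortExact (Injective.ι (cosyzygy M i)).hom (cosyzygyProjection M i) :=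
  .mkQ_range ((ModuleCat.mono_iff_injective _).mp inferInstance)

theorem injective_injectiveTerm (i : ℕ) : Module.Injective R (injectiveTerm M i) :=
  Module.injective_module_of_injective_object R _
    (inj := Injective.injective_under (cosyzygy M i))

end Syzygy

theorem statement19_general [Small.{v} R] (M : ModuleCat.{v} R) :
    ∃ (N : ModuleCat.{v} R) (s : M →ₗ[R] N) (p : N →ₗ[R] M),
      p ∘ₗ s = LinearMap.id ∧
      ∃ (P I : ℕ → ModuleCat.{v} R)
        (f : N →ₗ[R] ((⨁ i, P i) × ∀ i, I i)) (g : ((⨁ i, P i) × ∀ i, I i) →ₗ[R] N),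
        (∀ i, Module.Projective R (P i)) ∧ (∀ i, Module.Injective R (I i)) ∧
        IsShortExact f g := by
  obtain ⟨f, g, hfg⟩ := exists_isShortExact_of_resolutions
    (L := fun i => syzygy M i) (K := fun i => cosyzygy M i) (.refl R M) (.refl R M)
    (isShortExact_syzygyInclusion M) (isShortExact_cosyzygyProjection M)
  let N := M × (⨁ i, syzygy M (i + 1)) × ∀ i, cosyzygy M (i + 1)
  exact ⟨.of R N, .inl R _ _, .fst R _ _, LinearMap.fst_comp_inl R _ _,
    projectiveTerm M, injectiveTerm M, f, g, fun _ => inferInstance,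
    injective_injectiveTerm M, hfg⟩

/-- Every module `M` is a direct summand of a module `N` that fits in a
short exact sequence `0 → N → (⊕ᵢ Pᵢ) ⊕ (∏ᵢ Iᵢ) → N → 0` with the `Pᵢ` projective and the
`Iᵢ` injective. -/
theorem statement19 (M : ModuleCat.{u} R) :
    ∃ (N : ModuleCat.{u} R) (s : M →ₗ[R] N) (p : N →ₗ[R] M),
      p ∘ₗ s = LinearMap.id ∧
      ∃ (P I : ℕ → ModuleCat.{u} R)
        (f : N →ₗ[R] ((⨁ i, P i) × ∀ i, I i))
        (g : (ModuleCat.of R ((⨁ i, P i) × ∀ i, I i)) →ₗ[R] N),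
        (∀ i, Module.Projective R (P i)) ∧ (∀ i, Module.Injective R (I i)) ∧
        IsSES (B := ModuleCat.of R ((⨁ i, P i) × ∀ i, I i)) f g :=
  statement19_general M
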